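/- Let K be an imaginary quadratic field of discriminant d_K, p a prime, r ≥ 1, and 𝔤 = p^r O_K. Then the quotient group G = (O_K/𝔤)^× / (π_𝔤(O_K^×)·π_𝔤(Z)^×) has order (2 p^{r-1} / |O_K^×|) · (p - (d_K/p)). -/

import Mathlib

open NumberField

/-- The Kronecker symbol `(d/p)` for a prime `p`. -/
def kroneckerSym (d : ℤ) (p : ℕ) : ℤ :=
  if p = 2 then
    (if d % 2 = 0 then 0 else if d % 8 = 1 ∨ d % 8 = 7 then 1 else -1)
  else jacobiSym d p

/-- The subgroup `π_𝔤(O_K^×)·π_𝔤(ℤ)^×` of `(O_K/𝔤)^×`. -/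
def unitsIntSubgroup (K : Type*) [Field K] [NumberField K] (g : Ideal (𝓞 K)) :
    Subgroup (𝓞 K ⧸ g)ˣ :=
  Subgroup.closure
    (Set.range (Units.map (Ideal.Quotient.mk g : 𝓞 K →+* 𝓞 K ⧸ g).toMonoidHom) ∪
      {u : (𝓞 K ⧸ g)ˣ | ∃ n : ℤ, (u : 𝓞 K ⧸ g) = Ideal.Quotient.mk g (n : 𝓞 K)})

/-!
Write `R = ℤ[ω]` with `ω² = c + tω`, so that the discriminant is `t² + 4c`. An element of
`R/pʳ` is a unit iff its norm is nonzero modulo `p`. Over a field, the nonzero elements of norm zero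
are the nonzero multiples of `x - ω` with `x² = c + tx`, and modulo `p` the number of such `x` is
`1 + ((t² + 4c)/p)`; this counts the units of `R/p`, hence those of `R/pʳ`.

The subgroup `π(Rˣ)·π(ℤ)ˣ` is the image of `Rˣ × (ℤ/pʳ)ˣ`. A pair `(u, a)` in the kernel has `u`
congruent to an integer modulo `pʳ`; as the discriminant is negative, the norm form is too large for
a unit other than `±1` to have this property. So the kernel has order two, and Lagrange's theorem
gives the index.
-/

theorem card_units_mul_card_of_surjective {A B : Type*} [CommRing A] [CommRing B]
    (f : A →+* B) [IsLocalHom f] (hf : Function.Surjective f) :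
    Nat.card Aˣ * Nat.card B = Nat.card A * Nat.card Bˣ := by
  have card_ker_units : Nat.card (Units.map (f : A →* B)).ker = Nat.card f.toAddMonoidHom.ker :=
    calc Nat.card (Units.map (f : A →* B)).ker
        = Nat.card (f.toAddMonoidHom ⁻¹' {f.toAddMonoidHom 1}) := by
          refine Nat.card_congr (Equiv.ofBijective (fun u ↦ ⟨(u : Aˣ), ?_⟩) ⟨?_, ?_⟩)
          · simpa [Units.ext_iff] using MonoidHom.mem_ker.mp u.2
          · exact fun u v huv ↦ Subtype.ext (Units.ext (congrArg Subtype.val huv))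
          · rintro ⟨a, ha⟩
            have hfa : f a = 1 := by simpa using ha
            have hunit : IsUnit a := isUnit_of_map_unit f a (hfa ▸ isUnit_one)
            exact ⟨⟨hunit.unit, MonoidHom.mem_ker.mpr (Units.ext hfa)⟩, rfl⟩
      _ = Nat.card f.toAddMonoidHom.ker := Nat.card_congr (f.toAddMonoidHom.fiberEquivKer 1)
  have card_A : Nat.card f.toAddMonoidHom.ker * Nat.card B = Nat.card A := by
    rw [← AddSubgroup.card_mul_index f.toAddMonoidHom.ker, AddSubgroup.index_ker,
      AddMonoidHom.range_eq_top.mpr hf, AddSubgroup.card_top]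
  have range_units : (Units.map (f : A →* B)).range = ⊤ := MonoidHom.range_eq_top.mpr
    (IsLocalRing.surjective_units_map_of_local_ringHom f hf inferInstance)
  have card_A_units : Nat.card f.toAddMonoidHom.ker * Nat.card Bˣ = Nat.card Aˣ := by
    rw [← card_ker_units, ← Subgroup.card_mul_index (Units.map (f : A →* B)).ker,
      Subgroup.index_ker, range_units, Subgroup.card_top]
  rw [← card_A, ← card_A_units]
  ring

theorem isLocalHom_castHom_pow (n : ℕ) {k : ℕ} (hk : k ≠ 0) :
    IsLocalHom (ZMod.castHom (dvd_pow_self n hk) (ZMod n)) where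
  map_nonunit x hx := by
    obtain ⟨m, rfl⟩ := ZMod.intCast_surjective x
    rw [map_intCast, ZMod.coe_int_isUnit_iff_isCoprime] at hx
    rw [ZMod.coe_int_isUnit_iff_isCoprime, Nat.cast_pow]
    exact hx.pow_left

/-- The change of coefficients `A[ω] → B[ω']` along a ring homomorphism `f : A → B`, where
`ω² = a + bω` and `ω'² = f(a) + f(b)ω'`. The images `a'` and `b'` of `a` and `b` are separate
arguments, so that the reduction modulo `n` has target `QuadraticAlgebra (ZMod n) c t` with cast
integers `c` and `t`. -/
def quadraticAlgebraMap {A B : Type*} [CommRing A] [CommRing B] (f : A →+* B) {a b : A} {a' b' : B}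
    (ha : f a = a') (hb : f b = b') : QuadraticAlgebra A a b →+* QuadraticAlgebra B a' b' where
  toFun z := ⟨f z.re, f z.im⟩
  map_one' := by ext <;> simp [QuadraticAlgebra.re_one, QuadraticAlgebra.im_one]
  map_zero' := by ext <;> simp
  map_add' _ _ := by ext <;> simp
  map_mul' _ _ := by ext <;> simp [ha, hb]

namespace quadraticAlgebraMap

variable {A B : Type*} [CommRing A] [CommRing B] {f : A →+* B} {a b : A} {a' b' : B}
  (ha : f a = a') (hb : f b = b')

@[simp]
theorem re_apply (z : QuadraticAlgebra A a b) : (quadraticAlgebraMap f ha hb z).re = f z.re := rfl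

@[simp]
theorem im_apply (z : QuadraticAlgebra A a b) : (quadraticAlgebraMap f ha hb z).im = f z.im := rfl

theorem norm_apply (z : QuadraticAlgebra A a b) :
    (quadraticAlgebraMap f ha hb z).norm = f z.norm := by
  simp [QuadraticAlgebra.norm_def, ha, hb]

instance [IsLocalHom f] : IsLocalHom (quadraticAlgebraMap f ha hb) where
  map_nonunit z hz := by
    rw [QuadraticAlgebra.isUnit_iff_norm_isUnit, norm_apply] at hz
    exact QuadraticAlgebra.isUnit_iff_norm_isUnit.mpr (isUnit_of_map_unit f _ hz)

theorem surjective (hf : Function.Surjective f) :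
    Function.Surjective (quadraticAlgebraMap f ha hb) := by
  rintro ⟨x, y⟩
  obtain ⟨⟨x, rfl⟩, ⟨y, rfl⟩⟩ := And.intro (hf x) (hf y)
  exact ⟨⟨x, y⟩, rfl⟩

end quadraticAlgebraMap

section FiniteField

variable {F : Type*} [Field F] [Finite F]

theorem ncard_norm_eq_zero (a b : F) :
    {z : QuadraticAlgebra F a b | z.norm = 0}.ncard =
      1 + (Nat.card F - 1) * {x : F | x * x = a + b * x}.ncard := by
  let line (y : Fˣ × {x : F | x * x = a + b * x}) : QuadraticAlgebra F a b :=
    ⟨y.1 * y.2, -y.1⟩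
  have line_injective : Function.Injective line := by
    rintro ⟨s, x, hx⟩ ⟨s', x', hx'⟩ h
    obtain ⟨hre, him⟩ := QuadraticAlgebra.ext_iff.mp h
    obtain rfl : s = s' := Units.ext (neg_injective him)
    simpa [line] using hre
  have norm_zero_eq : {z : QuadraticAlgebra F a b | z.norm = 0} = insert 0 (Set.range line) := by
    ext ⟨x, y⟩
    simp only [Set.mem_ofPred_eq, Set.mem_insert_iff, Set.mem_range, QuadraticAlgebra.norm_def]
    constructor
    · intro h
      rcases eq_or_ne y 0 with rfl | hy
      · left
        ext
        · simpa using h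
        · rfl
      · refine .inr ⟨(Units.mk0 (-y) (neg_ne_zero.mpr hy), ⟨-x / y, ?_⟩), ?_⟩
        · simp only [Set.mem_ofPred_eq]
          field_simp
          linear_combination h
        · ext
          · simp only [line, Units.val_mk0, neg_mul]
            field_simp
          · simp [line]
    · rintro (h | ⟨⟨s, u, hu⟩, h⟩)
      · obtain ⟨rfl, rfl⟩ := QuadraticAlgebra.ext_iff.mp h
        simp
      · obtain ⟨rfl, rfl⟩ := QuadraticAlgebra.ext_iff.mp h
        simp only [line, Set.mem_ofPred_eq] at hu ⊢
        linear_combination (s : F) ^ 2 * hu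
  have zero_notMem : (0 : QuadraticAlgebra F a b) ∉ Set.range line := by
    rintro ⟨⟨s, x⟩, h⟩
    exact s.ne_zero (by simpa [line] using congrArg QuadraticAlgebra.im h)
  rw [norm_zero_eq, Set.ncard_insert_of_notMem zero_notMem, add_comm, ← Nat.card_coe_set_eq,
    Nat.card_range_of_injective line_injective, Nat.card_prod, Nat.card_units,
    Nat.card_coe_set_eq]

theorem card_units_quadraticAlgebra (a b : F) :
    (Nat.card (QuadraticAlgebra F a b)ˣ : ℤ) =
      (Nat.card F - 1) * (Nat.card F + 1 - {x : F | x * x = a + b * x}.ncard) := by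
  have : Finite (QuadraticAlgebra F a b) := .of_equiv _ (QuadraticAlgebra.equivProd a b).symm
  have isUnit_eq : {z : QuadraticAlgebra F a b | z.norm = 0}ᶜ =
      (IsUnit.submonoid (QuadraticAlgebra F a b) : Set (QuadraticAlgebra F a b)) := by
    ext z
    exact isUnit_iff_ne_zero.symm.trans QuadraticAlgebra.isUnit_iff_norm_isUnit.symm
  have card_units : {z : QuadraticAlgebra F a b | z.norm = 0}ᶜ.ncard =
      Nat.card (QuadraticAlgebra F a b)ˣ := by
    rw [isUnit_eq]
    exact (Nat.card_congr Submonoid.unitsTypeEquivIsUnitSubmonoid.toEquiv).symm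
  have card_total := Set.ncard_add_ncard_compl {z : QuadraticAlgebra F a b | z.norm = 0}
  rw [card_units, ncard_norm_eq_zero, Nat.card_congr (QuadraticAlgebra.equivProd a b),
    Nat.card_prod] at card_total
  zify [Nat.card_pos (α := F)] at card_total
  linear_combination card_total

end FiniteField

theorem ncard_roots_eq_quadraticChar {F : Type*} [Field F] [Fintype F] [DecidableEq F]
    (hF : ringChar F ≠ 2) (a b : F) :
    ({x : F | x * x = a + b * x}.ncard : ℤ) = 1 + quadraticChar F (b ^ 2 + 4 * a) := by
  have h2 : (2 : F) ≠ 0 := Ring.two_ne_zero hF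
  have completeSquare_injective : Function.Injective (fun x : F ↦ 2 * x - b) := fun x y h ↦
    mul_left_cancel₀ h2 (sub_left_injective h)
  have roots_eq : {x : F | x * x = a + b * x} =
      (fun x ↦ 2 * x - b) ⁻¹' {y : F | y ^ 2 = b ^ 2 + 4 * a} := by
    ext x
    rw [Set.mem_preimage, Set.mem_ofPred_eq, Set.mem_ofPred_eq,
      ← mul_right_inj' (mul_ne_zero h2 h2)]
    constructor <;> intro h <;> linear_combination h
  rw [roots_eq, Set.ncard_preimage_of_injective_subset_range completeSquare_injective
      fun y _ ↦ Finite.surjective_of_injective completeSquare_injective y,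
    Set.ncard_eq_toFinset_card', quadraticChar_card_sqrts hF, add_comm]

section ZModPrime

variable (p : ℕ) [Fact p.Prime] (c t : ℤ)

theorem ncard_roots_two_eq_kroneckerSym :
    ({x : ZMod 2 | x * x = c + t * x}.ncard : ℤ) = 1 + kroneckerSym (t ^ 2 + 4 * c) 2 := by
  have roots_of_even (c : ZMod 2) : {x : ZMod 2 | x * x = c + 0 * x}.ncard = 1 := by
    rw [Set.ncard_eq_toFinset_card']
    revert c
    decide
  have roots_of_odd (c : ZMod 2) :
      {x : ZMod 2 | x * x = c + 1 * x}.ncard = if c = 0 then 2 else 0 := by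
    rw [Set.ncard_eq_toFinset_card']
    revert c
    decide
  rw [kroneckerSym, if_pos rfl]
  rcases Int.even_or_odd t with ht | ht
  · have discr_even : (t ^ 2 + 4 * c) % 2 = 0 := by
      obtain ⟨k, rfl⟩ := ht
      ring_nf
      omega
    rw [if_pos discr_even, (ZMod.intCast_eq_zero_iff_even).mpr ht, roots_of_even]
    rfl
  · have discr_mod_eight : (t ^ 2 + 4 * c) % 8 = 1 + 4 * (c % 2) := by
      have := Int.eight_dvd_sq_sub_one_of_odd ht
      omega
    rw [if_neg (by omega), (ZMod.intCast_eq_one_iff_odd).mpr ht, roots_of_odd]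
    rcases Int.emod_two_eq_zero_or_one c with hc | hc
    · rw [if_pos (ZMod.intCast_eq_zero_iff_even.mpr (Int.even_iff.mpr hc)), if_pos (by omega)]
      rfl
    · rw [ZMod.intCast_eq_one_iff_odd.mpr (Int.odd_iff.mpr hc), if_neg one_ne_zero,
        if_neg (by omega)]
      rfl

theorem ncard_roots_eq_kroneckerSym :
    ({x : ZMod p | x * x = c + t * x}.ncard : ℤ) = 1 + kroneckerSym (t ^ 2 + 4 * c) p := by
  rcases eq_or_ne p 2 with rfl | hp
  · exact ncard_roots_two_eq_kroneckerSym c t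
  · rw [ncard_roots_eq_quadraticChar (by rwa [ZMod.ringChar_zmod_n]), kroneckerSym, if_neg hp,
      ← jacobiSym.legendreSym.to_jacobiSym, legendreSym]
    push_cast
    rfl

theorem card_units_quadraticAlgebra_zmod_prime_pow (r : ℕ) :
    (Nat.card (QuadraticAlgebra (ZMod (p ^ (r + 1))) c t)ˣ : ℤ) =
      p ^ (2 * r) * ((p - 1) * (p - kroneckerSym (t ^ 2 + 4 * c) p)) := by
  let f := ZMod.castHom (dvd_pow_self p r.add_one_ne_zero) (ZMod p)
  have : IsLocalHom f := isLocalHom_castHom_pow p r.add_one_ne_zero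
  have hf : Function.Surjective f := ZMod.castHom_surjective _
  have lifting := card_units_mul_card_of_surjective
    (quadraticAlgebraMap f (map_intCast f c) (map_intCast f t))
    (quadraticAlgebraMap.surjective _ _ hf)
  have residue := card_units_quadraticAlgebra (c : ZMod p) t
  rw [ncard_roots_eq_kroneckerSym] at residue
  simp only [Nat.card_congr (QuadraticAlgebra.equivProd _ _), Nat.card_prod, Nat.card_zmod]
    at lifting residue
  zify at lifting
  rw [residue] at lifting
  have hp : (p : ℤ) * p ≠ 0 := by simp [(Fact.out : p.Prime).ne_zero]
  apply mul_right_cancel₀ hp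
  rw [lifting]
  ring

end ZModPrime

section UnitsMulInts

variable {R S : Type*} [CommRing R] [CommRing S]

/-- The subgroup `φ(Rˣ)·φ(ℤ)ˣ` of `Sˣ`, for a ring homomorphism `φ : R → S`; the second factor
consists of the units of `S` which are images of integers. -/
def unitsMulInts (φ : R →+* S) : Subgroup Sˣ :=
  Subgroup.closure
    (Set.range (Units.map φ.toMonoidHom) ∪ {u : Sˣ | ∃ n : ℤ, (u : S) = φ (n : R)})

theorem unitsMulInts_comp_ringEquiv {R' : Type*} [CommRing R'] (φ : R →+* S) (e : R' ≃+* R) :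
    unitsMulInts (φ.comp (e : R' →+* R)) = unitsMulInts φ := by
  have range_eq : Set.range (Units.map (φ.comp (e : R' →+* R)).toMonoidHom) =
      Set.range (Units.map φ.toMonoidHom) :=
    (Units.mapEquiv e.toMulEquiv).surjective.range_comp (Units.map φ.toMonoidHom)
  simp only [unitsMulInts, range_eq, map_intCast]

theorem map_unitsMulInts_mapEquiv {S' : Type*} [CommRing S'] (φ : R →+* S) (e : S ≃+* S') :
    (unitsMulInts φ).map (Units.mapEquiv e.toMulEquiv : Sˣ →* S'ˣ) =
      unitsMulInts ((e : S →+* S').comp φ) := by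
  have image_range : Units.mapEquiv e.toMulEquiv '' Set.range (Units.map φ.toMonoidHom) =
      Set.range (Units.map ((e : S →+* S').comp φ).toMonoidHom) := (Set.range_comp _ _).symm
  have image_ints : Units.mapEquiv e.toMulEquiv '' {u : Sˣ | ∃ n : ℤ, (u : S) = φ (n : R)} =
      {u : S'ˣ | ∃ n : ℤ, (u : S') = (e : S →+* S').comp φ (n : R)} := by
    rw [← MulEquiv.coe_toEquiv, Equiv.image_eq_preimage_symm]
    ext u
    exact exists_congr fun n ↦ e.symm_apply_eq
  rw [unitsMulInts, MonoidHom.map_closure, Set.image_union]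
  exact congrArg Subgroup.closure (congrArg₂ _ image_range image_ints)

theorem card_quotient_unitsMulInts_mk_ker {φ : R →+* S} (hφ : Function.Surjective φ) :
    Nat.card ((R ⧸ RingHom.ker φ)ˣ ⧸ unitsMulInts (Ideal.Quotient.mk (RingHom.ker φ))) =
      (unitsMulInts φ).index := by
  let e := RingHom.quotientKerEquivOfSurjective hφ
  have e_comp_mk : (e : R ⧸ RingHom.ker φ →+* S).comp (Ideal.Quotient.mk _) = φ :=
    RingHom.ext fun _ ↦ rfl
  rw [← Subgroup.index_eq_card, ← Subgroup.index_map_equiv _ (Units.mapEquiv e.toMulEquiv),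
    map_unitsMulInts_mapEquiv, e_comp_mk]

/-- The homomorphism `(u, a) ↦ φ(u)·a` from `Rˣ × (ℤ/n)ˣ` to `Sˣ`, for a ring homomorphism `φ`
from `R` to a `ℤ/n`-algebra `S`; it parametrises `unitsMulInts φ`. -/
def unitsMulScalars (φ : R →+* S) (n : ℕ) [Algebra (ZMod n) S] : Rˣ × (ZMod n)ˣ →* Sˣ :=
  (Units.map φ.toMonoidHom).coprod (Units.map (algebraMap (ZMod n) S).toMonoidHom)

theorem range_unitsMulScalars (φ : R →+* S) (n : ℕ) [Algebra (ZMod n) S]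
    [IsLocalHom (algebraMap (ZMod n) S)] :
    (unitsMulScalars φ n).range = unitsMulInts φ := by
  have ints_eq : {u : Sˣ | ∃ m : ℤ, (u : S) = φ (m : R)} =
      (Units.map (algebraMap (ZMod n) S).toMonoidHom).range := by
    ext u
    constructor
    · rintro ⟨m, hm⟩
      rw [map_intCast, ← map_intCast (algebraMap (ZMod n) S)] at hm
      have hunit : IsUnit (m : ZMod n) :=
        isUnit_of_map_unit (algebraMap (ZMod n) S) _ (hm ▸ u.isUnit)
      exact ⟨hunit.unit, Units.ext hm.symm⟩
    · rintro ⟨a, rfl⟩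
      obtain ⟨m, hm⟩ := ZMod.intCast_surjective (a : ZMod n)
      exact ⟨m, by simp [← hm]⟩
  rw [unitsMulInts, Subgroup.closure_union, ints_eq, ← MonoidHom.coe_range, Subgroup.closure_eq,
    Subgroup.closure_eq]
  exact MonoidHom.noncommCoprod_range (Units.map φ.toMonoidHom)
    (Units.map (algebraMap (ZMod n) S).toMonoidHom) fun _ _ ↦ .all _ _

end UnitsMulInts

theorem isLocalHom_algebraMap_quadraticAlgebra {A : Type*} [CommRing A] (a b : A) :
    IsLocalHom (algebraMap A (QuadraticAlgebra A a b)) where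
  map_nonunit x hx := by
    rw [QuadraticAlgebra.isUnit_iff_norm_isUnit, QuadraticAlgebra.norm_algebraMap] at hx
    exact (isUnit_pow_iff two_ne_zero).mp hx

theorem eq_one_or_eq_neg_one_of_isUnit_of_dvd_im {c t : ℤ} (h_neg : t ^ 2 + 4 * c < 0)
    {u : QuadraticAlgebra ℤ c t} (hu : IsUnit u) {n : ℤ} (hn : 2 ≤ n) (h_dvd : n ∣ u.im) :
    u = 1 ∨ u = -1 := by
  have four_mul_norm : 4 * u.norm =
      (2 * u.re + t * u.im) ^ 2 - (t ^ 2 + 4 * c) * u.im ^ 2 := by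
    rw [QuadraticAlgebra.norm_def]
    ring
  have norm_eq_one : u.norm = 1 := by
    rcases Int.isUnit_iff.mp (QuadraticAlgebra.isUnit_iff_norm_isUnit.mp hu) with h | h
    · exact h
    · nlinarith [sq_nonneg (2 * u.re + t * u.im), sq_nonneg u.im]
  -- A discriminant is `0` or `1` modulo `4`.
  have discr_le : t ^ 2 + 4 * c ≤ -3 := by
    rcases Int.even_or_odd' t with ⟨k, rfl | rfl⟩ <;> ring_nf at h_neg ⊢ <;> omega
  have im_eq_zero : u.im = 0 := by
    by_contra h
    have two_le_abs_im : 2 ≤ |u.im| :=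
      hn.trans (Int.le_of_dvd (abs_pos.mpr h) ((dvd_abs _ _).mpr h_dvd))
    nlinarith [sq_nonneg (2 * u.re + t * u.im), sq_abs u.im]
  have re_mul_re : u.re * u.re = 1 := by
    simpa [QuadraticAlgebra.norm_def, im_eq_zero] using norm_eq_one
  refine (mul_self_eq_one_iff.mp re_mul_re).imp (fun h ↦ ?_) (fun h ↦ ?_) <;>
    ext <;> simp [h, im_eq_zero, QuadraticAlgebra.re_one, QuadraticAlgebra.im_one]

/-- Reduction modulo `n` of the quadratic order `ℤ[ω]` with `ω² = c + tω`. -/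
def quadraticOrderReduction (c t : ℤ) (n : ℕ) :
    QuadraticAlgebra ℤ c t →+* QuadraticAlgebra (ZMod n) c t :=
  quadraticAlgebraMap (Int.castRingHom (ZMod n)) rfl rfl

section Reduction

variable {c t : ℤ} {n : ℕ}

@[simp]
theorem quadraticOrderReduction_re (z : QuadraticAlgebra ℤ c t) :
    (quadraticOrderReduction c t n z).re = z.re := rfl

@[simp]
theorem quadraticOrderReduction_im (z : QuadraticAlgebra ℤ c t) :
    (quadraticOrderReduction c t n z).im = z.im := rfl

theorem quadraticOrderReduction_surjective : Function.Surjective (quadraticOrderReduction c t n) :=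
  quadraticAlgebraMap.surjective rfl rfl ZMod.intCast_surjective

theorem ker_quadraticOrderReduction :
    RingHom.ker (quadraticOrderReduction c t n) =
      Ideal.span {(n : QuadraticAlgebra ℤ c t)} := by
  ext z
  have natCast_eq : (n : QuadraticAlgebra ℤ c t) = algebraMap ℤ _ (n : ℤ) := by simp
  rw [RingHom.mem_ker, Ideal.mem_span_singleton, natCast_eq, QuadraticAlgebra.algebraMap_dvd_iff,
    QuadraticAlgebra.ext_iff, ← ZMod.intCast_zmod_eq_zero_iff_dvd,
    ← ZMod.intCast_zmod_eq_zero_iff_dvd]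
  rfl

theorem ker_unitsMulScalars_reduction (h_neg : t ^ 2 + 4 * c < 0) (hn : 2 ≤ n) :
    ((unitsMulScalars (quadraticOrderReduction c t n) n).ker :
      Set ((QuadraticAlgebra ℤ c t)ˣ × (ZMod n)ˣ)) = {1, -1} := by
  ext ⟨u, a⟩
  simp only [SetLike.mem_coe, MonoidHom.mem_ker, Set.mem_insert_iff, Set.mem_singleton_iff]
  constructor
  · intro h
    have h_mul : quadraticOrderReduction c t n u * algebraMap (ZMod n) _ (a : ZMod n) = 1 :=
      congrArg Units.val h
    have im_eq_zero : ((u : QuadraticAlgebra ℤ c t).im : ZMod n) = 0 := by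
      simpa [QuadraticAlgebra.im_one] using congrArg QuadraticAlgebra.im h_mul
    have re_mul_eq_one : ((u : QuadraticAlgebra ℤ c t).re : ZMod n) * a = 1 := by
      simpa [QuadraticAlgebra.re_one] using congrArg QuadraticAlgebra.re h_mul
    rcases eq_one_or_eq_neg_one_of_isUnit_of_dvd_im h_neg u.isUnit (Nat.ofNat_le_cast.mpr hn)
      ((ZMod.intCast_zmod_eq_zero_iff_dvd _ _).mp im_eq_zero) with hu | hu
    · refine .inl (Prod.ext (Units.ext hu) (Units.ext ?_))
      simpa [hu, QuadraticAlgebra.re_one] using re_mul_eq_one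
    · refine .inr (Prod.ext (Units.ext hu) (Units.ext ?_))
      simpa [hu, QuadraticAlgebra.re_one, neg_eq_iff_eq_neg] using re_mul_eq_one
  · rintro (h | h)
    · rw [h, map_one]
    · rw [h]
      ext1
      simp [unitsMulScalars]

theorem two_mul_card_unitsMulInts (h_neg : t ^ 2 + 4 * c < 0) (hn : 2 ≤ n) :
    2 * Nat.card (unitsMulInts (quadraticOrderReduction c t n)) =
      Nat.card (QuadraticAlgebra ℤ c t)ˣ * n.totient := by
  let φ := quadraticOrderReduction c t n
  have := isLocalHom_algebraMap_quadraticAlgebra (c : ZMod n) t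
  have : NeZero n := ⟨by omega⟩
  have one_ne_neg_one : (1 : (QuadraticAlgebra ℤ c t)ˣ × (ZMod n)ˣ) ≠ -1 := fun h ↦ by
    simpa [QuadraticAlgebra.re_one] using
      congrArg (fun u ↦ (u.1 : QuadraticAlgebra ℤ c t).re) h
  have card_ker : Nat.card (unitsMulScalars φ n).ker = 2 := by
    rw [← Set.ncard_pair one_ne_neg_one, ← ker_unitsMulScalars_reduction h_neg hn]
    rfl
  calc 2 * Nat.card (unitsMulInts φ)
      = Nat.card (unitsMulScalars φ n).ker * (unitsMulScalars φ n).ker.index := by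
        rw [card_ker, Subgroup.index_ker, range_unitsMulScalars]
    _ = Nat.card (QuadraticAlgebra ℤ c t)ˣ * n.totient := by
        rw [Subgroup.card_mul_index, Nat.card_prod, Nat.card_eq_fintype_card (α := (ZMod n)ˣ),
          ZMod.card_units_eq_totient]

theorem index_unitsMulInts_quadraticOrderReduction_mul_card_units (h_neg : t ^ 2 + 4 * c < 0)
    {p : ℕ} (hp : p.Prime) (r : ℕ) :
    ((unitsMulInts (quadraticOrderReduction c t (p ^ (r + 1)))).index : ℤ) *
        Nat.card (QuadraticAlgebra ℤ c t)ˣ =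
      2 * p ^ r * (p - kroneckerSym (t ^ 2 + 4 * c) p) := by
  have : Fact p.Prime := ⟨hp⟩
  let U := unitsMulInts (quadraticOrderReduction c t (p ^ (r + 1)))
  have card_U : 2 * (Nat.card U : ℤ) =
      Nat.card (QuadraticAlgebra ℤ c t)ˣ * (p ^ r * (p - 1)) := by
    have two_le : 2 ≤ p ^ (r + 1) := hp.two_le.trans (Nat.le_self_pow r.succ_ne_zero p)
    have card_eq := two_mul_card_unitsMulInts h_neg two_le
    rw [Nat.totient_prime_pow_succ hp] at card_eq
    zify [hp.one_le] at card_eq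
    exact card_eq
  have lagrange : (Nat.card U : ℤ) * U.index =
      p ^ (2 * r) * ((p - 1) * (p - kroneckerSym (t ^ 2 + 4 * c) p)) := by
    rw [← card_units_quadraticAlgebra_zmod_prime_pow, ← Subgroup.card_mul_index U, Nat.cast_mul]
  have totient_ne_zero : (p : ℤ) ^ r * (p - 1) ≠ 0 :=
    mul_ne_zero (pow_ne_zero _ (mod_cast hp.ne_zero)) (sub_ne_zero.mpr (mod_cast hp.ne_one))
  apply mul_right_cancel₀ totient_ne_zero
  linear_combination 2 * lagrange - (U.index : ℤ) * card_U

end Reduction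

section FreeOfRankTwo

variable {A R : Type*} [CommRing A] [CommRing R] [Algebra A R]

theorem trace_quadraticAlgebra (a b : A) (z : QuadraticAlgebra A a b) :
    Algebra.trace A (QuadraticAlgebra A a b) z = 2 * z.re + b * z.im := by
  rw [Algebra.trace_eq_matrix_trace (QuadraticAlgebra.basis a b), Matrix.trace_fin_two]
  simp only [QuadraticAlgebra.basis, Fin.isValue, Algebra.leftMulMatrix_eq_repr_mul,
    Module.Basis.coe_ofEquivFun, QuadraticAlgebra.linearEquivTuple_symm_apply, Pi.single_eq_same,
    ne_eq, one_ne_zero, not_false_eq_true, Pi.single_eq_of_ne, Module.Basis.ofEquivFun_repr_apply,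
    QuadraticAlgebra.linearEquivTuple_apply, Nat.succ_eq_add_one, Nat.reduceAdd,
    QuadraticAlgebra.re_mul, mul_one, mul_zero, add_zero, QuadraticAlgebra.im_mul, zero_add,
    Matrix.cons_val_zero, zero_ne_one, Matrix.cons_val_one, Matrix.cons_val_fin_one]
  ring

theorem discr_basis_quadraticAlgebra (a b : A) :
    Algebra.discr A (QuadraticAlgebra.basis a b) = b ^ 2 + 4 * a := by
  rw [Algebra.discr_def, Matrix.det_fin_two]
  simp only [QuadraticAlgebra.basis, Module.Basis.coe_ofEquivFun,
    QuadraticAlgebra.linearEquivTuple_symm_apply, Fin.isValue, Algebra.traceMatrix_apply,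
    Pi.single_eq_same, ne_eq, one_ne_zero, not_false_eq_true, Pi.single_eq_of_ne,
    Algebra.traceForm_apply, QuadraticAlgebra.mk_mul_mk, mul_one, mul_zero, add_zero,
    trace_quadraticAlgebra, zero_ne_one, zero_add]
  ring

theorem isCoprime_repr_one (b : Module.Basis (Fin 2) A R) :
    IsCoprime (b.repr 1 0) (b.repr 1 1) := by
  rcases subsingleton_or_nontrivial A with _ | _
  · exact ⟨0, 0, Subsingleton.elim _ _⟩
  have : Nontrivial R := b.repr.toEquiv.nontrivial
  have : Module.Free A R := .of_basis b
  let I : Ideal A := Ideal.span {b.repr 1 0, b.repr 1 1}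
  have one_mem : (1 : R) ∈ I.map (algebraMap A R) := by
    rw [← b.sum_repr 1, Fin.sum_univ_two, Algebra.smul_def, Algebra.smul_def]
    refine add_mem (Ideal.mul_mem_right _ _ (Ideal.mem_map_of_mem _ (Ideal.subset_span ?_)))
      (Ideal.mul_mem_right _ _ (Ideal.mem_map_of_mem _ (Ideal.subset_span ?_))) <;> simp
  have one_mem_I : (1 : A) ∈ I := by
    rw [← Ideal.comap_map_eq_self_of_faithfullyFlat (B := R) I, Ideal.mem_comap, map_one]
    exact one_mem
  exact Ideal.mem_span_pair.mp one_mem_I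

theorem exists_basis_zero_eq_one (b : Module.Basis (Fin 2) A R) :
    ∃ b' : Module.Basis (Fin 2) A R, b' 0 = 1 := by
  obtain ⟨u, v, huv⟩ := isCoprime_repr_one b
  let adapted : Fin 2 → R := ![1, -v • b 0 + u • b 1]
  have det_eq_one : b.det adapted = 1 := by
    have col_zero (i : Fin 2) : b.toMatrix adapted i 0 = b.repr 1 i := rfl
    have entry_zero_one : b.toMatrix adapted 0 1 = -v := by
      simp [adapted, Module.Basis.toMatrix_apply]
    have entry_one_one : b.toMatrix adapted 1 1 = u := by
      simp [adapted, Module.Basis.toMatrix_apply]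
    rw [b.det_apply, Matrix.det_fin_two, col_zero, col_zero, entry_zero_one, entry_one_one]
    linear_combination huv
  obtain ⟨independent, spanning⟩ := b.is_basis_iff_det.mpr (det_eq_one ▸ isUnit_one)
  exact ⟨.mk independent spanning.ge, by simp [adapted]⟩

theorem exists_algEquiv_quadraticAlgebra (b : Module.Basis (Fin 2) A R) :
    ∃ c t : A, Nonempty (QuadraticAlgebra A c t ≃ₐ[A] R) := by
  obtain ⟨b, hb⟩ := exists_basis_zero_eq_one b
  let c := b.repr (b 1 * b 1) 0
  let t := b.repr (b 1 * b 1) 1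
  have hω : b 1 * b 1 = c • 1 + t • b 1 := by
    rw [← hb, ← Fin.sum_univ_two fun i ↦ b.repr (b 1 * b 1) i • b i, b.sum_repr]
  let f : QuadraticAlgebra A c t →ₐ[A] R := QuadraticAlgebra.lift ⟨b 1, hω⟩
  have f_eq : f.toLinearMap = (QuadraticAlgebra.basis c t).equiv b (Equiv.refl _) := by
    refine (QuadraticAlgebra.basis c t).ext fun i ↦ ?_
    rw [LinearEquiv.coe_coe, Module.Basis.equiv_apply]
    fin_cases i <;> simp [f, hb, QuadraticAlgebra.lift, QuadraticAlgebra.basis]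
  have f_bijective : Function.Bijective f := by
    rw [← AlgHom.coe_toLinearMap, f_eq]
    exact LinearEquiv.bijective _
  exact ⟨c, t, ⟨AlgEquiv.ofBijective f f_bijective⟩⟩

end FreeOfRankTwo

theorem discr_neg_of_isTotallyComplex_of_finrank_eq_two {K : Type*} [Field K]
    [NumberField K] [IsTotallyComplex K] (h : Module.finrank ℚ K = 2) : discr K < 0 := by
  have card_places : InfinitePlace.nrComplexPlaces K = 1 := by
    have := IsTotallyComplex.finrank (K := K)
    omega
  rw [← Int.sign_eq_neg_one_iff_neg, sign_discr, card_places, pow_one]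

theorem card_quotient_group_formula_general {R : Type*} [CommRing R] (b : Module.Basis (Fin 2) ℤ R)
    (hb : Algebra.discr ℤ b < 0) {p : ℕ} (hp : p.Prime) {r : ℕ} (hr : 1 ≤ r) :
    (Nat.card ((R ⧸ Ideal.span {(p : R) ^ r})ˣ ⧸
        unitsMulInts (Ideal.Quotient.mk (Ideal.span {(p : R) ^ r}))) : ℤ) * Nat.card Rˣ =
      2 * p ^ (r - 1) * (p - kroneckerSym (Algebra.discr ℤ b) p) := by
  obtain ⟨r, rfl⟩ := Nat.exists_eq_add_of_le' hr
  have : Fact p.Prime := ⟨hp⟩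
  obtain ⟨c, t, ⟨e⟩⟩ := exists_algEquiv_quadraticAlgebra b
  have discr_eq : Algebra.discr ℤ b = t ^ 2 + 4 * c := by
    rw [← discr_basis_quadraticAlgebra, Algebra.discr_eq_discr_of_algEquiv _ e]
    exact Algebra.discr_eq_discr R b ((QuadraticAlgebra.basis c t).map e.toLinearEquiv)
  rw [discr_eq] at hb ⊢
  let φ := quadraticOrderReduction c t (p ^ (r + 1))
  let ψ := φ.comp (e.symm.toRingEquiv : R →+* QuadraticAlgebra ℤ c t)
  have hψ : Function.Surjective ψ :=
    quadraticOrderReduction_surjective.comp e.symm.surjective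
  have ker_ψ : RingHom.ker ψ = Ideal.span {(p : R) ^ (r + 1)} := by
    rw [← RingHom.comap_ker, ker_quadraticOrderReduction]
    refine (Ideal.comap_symm e.toRingEquiv).trans ?_
    rw [Ideal.map_span, Set.image_singleton, map_natCast, Nat.cast_pow]
  rw [← ker_ψ, card_quotient_unitsMulInts_mk_ker hψ, unitsMulInts_comp_ringEquiv,
    ← Nat.card_congr (Units.mapEquiv e.toMulEquiv).toEquiv]
  exact index_unitsMulInts_quadraticOrderReduction_mul_card_units hb hp r

theorem unitsIntSubgroup_eq_unitsMulInts (K : Type*) [Field K] [NumberField K] (g : Ideal (𝓞 K)) :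
    unitsIntSubgroup K g = unitsMulInts (Ideal.Quotient.mk g) := rfl

theorem card_quotient_group_formula (K : Type*) [Field K] [NumberField K]
    (h2 : Module.finrank ℚ K = 2)
    (him : ∀ v : InfinitePlace K, v.IsComplex)
    (p : ℕ) (hp : p.Prime) (r : ℕ) (hr : 1 ≤ r)
    (g : Ideal (𝓞 K)) (hg : g = Ideal.span {(p : 𝓞 K) ^ r}) :
    (Nat.card ((𝓞 K ⧸ g)ˣ ⧸ unitsIntSubgroup K g) : ℤ) * (Nat.card (𝓞 K)ˣ : ℤ)
      = 2 * (p : ℤ) ^ (r - 1) * ((p : ℤ) - kroneckerSym (discr K) p) := by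
  have : IsTotallyComplex K := ⟨him⟩
  let b := Module.finBasisOfFinrankEq ℤ (𝓞 K) ((RingOfIntegers.rank K).trans h2)
  have discr_neg := discr_neg_of_isTotallyComplex_of_finrank_eq_two h2
  rw [← discr_eq_discr K b] at discr_neg ⊢
  rw [hg, unitsIntSubgroup_eq_unitsMulInts]
  exact card_quotient_group_formula_general b discr_neg hp hr
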